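/- arXiv:math/0309415 — 2 statements merged into one kernel-verified Lean document; each statement's English description precedes it below -/
import Mathlib

section
/- Let Ω ⊆ ℂ² be open with coordinates (x,y), let u₁,u₂ : Ω → ℂ be holomorphic with J(u₁,u₂) ≠ 0 on Ω, and let γ ∈ GL(3,ℂ) with rows (a₁,a₂,a₃),(b₁,b₂,b₃),(c₁,c₂,c₃) be such that c₁u₁+c₂u₂+c₃ ≠ 0 on Ω. Define (v₁,v₂) := γ(u₁,u₂) = ((a₁u₁+a₂u₂+a₃)/(c₁u₁+c₂u₂+c₃), (b₁u₁+b₂u₂+b₃)/(c₁u₁+c₂u₂+c₃)). Then J(v₁,v₂) = det(γ)·(c₁u₁+c₂u₂+c₃)⁻³·J(u₁,u₂) ≠ 0, and at every point of Ω: {v₁,v₂;x,y}ₓ = {u₁,u₂;x,y}ₓ, {v₁,v₂;x,y}ᵧ = {u₁,u₂;x,y}ᵧ, [v₁,v₂;x,y]ₓ = [u₁,u₂;x,y]ₓ, and [v₁,v₂;x,y]ᵧ = [u₁,u₂;x,y]ᵧ. -/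
/-!
Restrict `u = (u₁, u₂)` to the line through `p` in the direction `(α, β)`. The Wronskian of the
derivatives of the two restrictions, divided by `J(u₁, u₂)`, is a binary cubic form in `(α, β)`
whose coefficients are, up to sign, the four GL(3) derivatives. Both the Jacobian and this Wronskian
are `3 × 3` determinants with rows the jets of `u₁`, `u₂` and `1`. If `D` is the denominator of
`γ(u₁, u₂) = (v₁, v₂)`, then `(D v₁, D v₂, D) = γ (u₁, u₂, 1)`, while by Leibniz' rule
multiplication by `D` is right multiplication of the jets by a triangular matrix of determinant
`D³`. So both determinants are multiplied by `det γ · D⁻³`, and the cubic form is invariant.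

The second derivatives exist because a directional derivative of a holomorphic function is, by
Schwarz's lemma, a locally uniform limit of difference quotients, which are again holomorphic.
-/

open Complex Matrix

noncomputable section

/-- Partial derivative in the first complex variable. -/
def pdx (f : ℂ × ℂ → ℂ) (p : ℂ × ℂ) : ℂ := deriv (fun x => f (x, p.2)) p.1

/-- Partial derivative in the second complex variable. -/
def pdy (f : ℂ × ℂ → ℂ) (p : ℂ × ℂ) : ℂ := deriv (fun y => f (p.1, y)) p.2

/-- The Jacobian `J(u₁,u₂) = ∂ₓu₁·∂ᵧu₂ − ∂ₓu₂·∂ᵧu₁`. -/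
def Jac (u₁ u₂ : ℂ × ℂ → ℂ) (p : ℂ × ℂ) : ℂ :=
  pdx u₁ p * pdy u₂ p - pdx u₂ p * pdy u₁ p

/-- The GL(3) derivative `{u₁,u₂;x,y}ₓ`. -/
def brX (u₁ u₂ : ℂ × ℂ → ℂ) (p : ℂ × ℂ) : ℂ :=
  (pdx u₁ p * pdx (pdx u₂) p - pdx u₂ p * pdx (pdx u₁) p) / Jac u₁ u₂ p

/-- The GL(3) derivative `{u₁,u₂;x,y}ᵧ`. -/
def brY (u₁ u₂ : ℂ × ℂ → ℂ) (p : ℂ × ℂ) : ℂ :=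
  -(pdy u₁ p * pdy (pdy u₂) p - pdy u₂ p * pdy (pdy u₁) p) / Jac u₁ u₂ p

/-- The GL(3) derivative `[u₁,u₂;x,y]ₓ`. -/
def sqX (u₁ u₂ : ℂ × ℂ → ℂ) (p : ℂ × ℂ) : ℂ :=
  ((pdy u₁ p * pdx (pdx u₂) p - pdy u₂ p * pdx (pdx u₁) p)
      + 2 * (pdx u₁ p * pdx (pdy u₂) p - pdx u₂ p * pdx (pdy u₁) p)) / Jac u₁ u₂ p

/-- The GL(3) derivative `[u₁,u₂;x,y]ᵧ`. -/
def sqY (u₁ u₂ : ℂ × ℂ → ℂ) (p : ℂ × ℂ) : ℂ :=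
  -((pdx u₁ p * pdy (pdy u₂) p - pdx u₂ p * pdy (pdy u₁) p)
      + 2 * (pdy u₁ p * pdx (pdy u₂) p - pdy u₂ p * pdx (pdy u₁) p)) / Jac u₁ u₂ p

section SeveralVariables

open Filter Metric Topology

variable {E F : Type*} [NormedAddCommGroup E] [NormedSpace ℂ E] [NormedAddCommGroup F]
  [NormedSpace ℂ F]

lemma mapsTo_closedBall_two_mul_of_norm_le {X G : Type*} [SeminormedAddCommGroup G]
    {f : X → G} {s : Set X} {c : X} {M : ℝ}
    (hM : ∀ z ∈ s, ‖f z‖ ≤ M) (hc : c ∈ s) : Set.MapsTo f s (closedBall (f c) (2 * M)) := by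
  intro z hz
  rw [mem_closedBall, dist_eq_norm]
  linarith [norm_sub_le (f z) (f c), hM z hz, hM c hc]

lemma norm_fderiv_le_of_norm_le_on_ball {f : E → F} {c : E} {r M : ℝ} (hr : 0 < r)
    (hf : DifferentiableOn ℂ f (ball c r)) (hM : ∀ z ∈ ball c r, ‖f z‖ ≤ M) :
    ‖fderiv ℂ f c‖ ≤ 2 * M / r :=
  norm_fderiv_le_div_of_mapsTo_ball hf
    (mapsTo_closedBall_two_mul_of_norm_le hM (mem_ball_self hr)) hr

lemma dist_dslope_deriv_le [CompleteSpace F] {f : ℂ → F} {c z : ℂ} {r M : ℝ}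
    (hf : DifferentiableOn ℂ f (ball c r)) (hM : ∀ w ∈ ball c r, ‖f w‖ ≤ M)
    (hz : z ∈ ball c r) :
    dist (dslope f c z) (deriv f c) ≤ 2 * (2 * M / r) / r * dist z c := by
  have hc : c ∈ ball c r := mem_ball_self (pos_of_mem_ball hz)
  have hslope : ∀ w ∈ ball c r, ‖dslope f c w‖ ≤ 2 * M / r := fun w hw =>
    norm_dslope_le_div_of_mapsTo_ball hf (mapsTo_closedBall_two_mul_of_norm_le hM hc) hw
  have hdiff : DifferentiableOn ℂ (dslope f c) (ball c r) :=
    (differentiableOn_dslope (isOpen_ball.mem_nhds hc)).2 hf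
  simpa only [dslope_same] using dist_le_div_mul_dist_of_mapsTo_ball hdiff
    (mapsTo_closedBall_two_mul_of_norm_le hslope hc) hz

/-- By Schwarz's lemma the supremum of `f m - f n` bounds its derivative on the smaller ball. -/
lemma uniformCauchySeqOn_fderiv_of_ball {ι : Type*} {l : Filter ι} {f : ι → E → F} {c : E}
    {r : ℝ} (hr : 0 < r) (hf : ∀ᶠ n in l, DifferentiableOn ℂ (f n) (ball c r))
    (hcauchy : UniformCauchySeqOn f l (ball c r)) :
    UniformCauchySeqOn (fun n => fderiv ℂ (f n)) l (ball c (r / 2)) := by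
  intro u hu
  obtain ⟨ε, hε, hεu⟩ := mem_uniformity_dist.1 hu
  filter_upwards [hcauchy _ (dist_mem_uniformity (show 0 < ε * r / 8 by positivity)),
    hf.prod_mk hf] with ⟨m, n⟩ hclose ⟨hm, hn⟩ x hx
  have hsub : ball x (r / 2) ⊆ ball c r := ball_subset_ball' (by linarith [mem_ball.1 hx])
  have hxr : ball c r ∈ 𝓝 x := isOpen_ball.mem_nhds (hsub (mem_ball_self (half_pos hr)))
  have hbound : ‖fderiv ℂ (f m - f n) x‖ ≤ 2 * (ε * r / 8) / (r / 2) :=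
    norm_fderiv_le_of_norm_le_on_ball (half_pos hr) ((hm.sub hn).mono hsub) fun z hz => by
      simpa [dist_eq_norm] using (hclose z (hsub hz)).le
  apply hεu
  rw [dist_eq_norm, ← fderiv_sub (hm.differentiableAt hxr) (hn.differentiableAt hxr)]
  calc ‖fderiv ℂ (f m - f n) x‖ ≤ 2 * (ε * r / 8) / (r / 2) := hbound
    _ = ε / 2 := by field
    _ < ε := half_lt_self hε

theorem differentiableAt_of_tendstoUniformlyOn_ball [CompleteSpace F] {ι : Type*} {l : Filter ι}
    [l.NeBot] {f : ι → E → F} {g : E → F} {c : E} {r : ℝ} (hr : 0 < r)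
    (hf : ∀ᶠ n in l, DifferentiableOn ℂ (f n) (ball c r))
    (hlim : TendstoUniformlyOn f g l (ball c r)) : DifferentiableAt ℂ g c := by
  have hcauchy := uniformCauchySeqOn_fderiv_of_ball hr hf hlim.uniformCauchySeqOn
  choose! g' hg' using fun x (hx : x ∈ ball c (r / 2)) =>
    cauchy_map_iff_exists_tendsto.1 (hcauchy.cauchy_map hx)
  have hball : ∀ᶠ x in 𝓝 c, x ∈ ball c r := ball_mem_nhds c hr
  have hderiv : TendstoUniformlyOnFilter (fun n => fderiv ℂ (f n)) g' l (𝓝 c) :=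
    (hcauchy.tendstoUniformlyOn_of_tendsto hg').tendstoUniformlyOnFilter.mono_right
      (le_principal_iff.2 (ball_mem_nhds c (half_pos hr)))
  refine (hasFDerivAt_of_tendstoUniformlyOnFilter (f := f) hderiv ?_ ?_).differentiableAt
  · filter_upwards [hf.prod_mk hball] with ⟨n, x⟩ ⟨hn, hx⟩
    exact (hn.differentiableAt (isOpen_ball.mem_nhds hx)).hasFDerivAt
  · filter_upwards [hball] with x hx using hlim.tendsto_at hx

lemma tendstoUniformlyOn_dslope {X : Type*} [CompleteSpace F] {f : X → ℂ → F} {s : Set X}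
    {c : ℂ} {r M : ℝ} (hr : 0 < r) (hf : ∀ x ∈ s, DifferentiableOn ℂ (f x) (ball c r))
    (hM : ∀ x ∈ s, ∀ z ∈ ball c r, ‖f x z‖ ≤ M) :
    TendstoUniformlyOn (fun z x => dslope (f x) c z) (fun x => deriv (f x) c) (𝓝[≠] c) s := by
  rw [Metric.tendstoUniformlyOn_iff]
  intro ε hε
  have hlim : Tendsto (fun z => 2 * (2 * M / r) / r * dist z c) (𝓝 c) (𝓝 0) :=
    Continuous.tendsto' (by fun_prop) c 0 (by simp)
  filter_upwards [nhdsWithin_le_nhds (hlim.eventually_lt_const hε),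
    nhdsWithin_le_nhds (ball_mem_nhds c hr)] with z hzε hzr x hx
  rw [dist_comm]
  exact (dist_dslope_deriv_le (hf x hx) (hM x hx) hzr).trans_lt hzε

theorem differentiableAt_deriv_of_eventually [CompleteSpace F] {f : E × ℂ → F} {p : E} {c : ℂ}
    (hf : ∀ᶠ z in 𝓝 (p, c), DifferentiableAt ℂ f z) :
    DifferentiableAt ℂ (fun q => deriv (fun t => f (q, t)) c) p := by
  have hbound : ∀ᶠ z in 𝓝 (p, c), ‖f z‖ < ‖f (p, c)‖ + 1 :=
    hf.self_of_nhds.continuousAt.norm.eventually_lt_const (lt_add_one _)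
  obtain ⟨r, hr, hball⟩ := Metric.eventually_nhds_iff_ball.1 (hf.and hbound)
  have hgood : ∀ q ∈ ball p r, ∀ t ∈ ball c r,
      DifferentiableAt ℂ f (q, t) ∧ ‖f (q, t)‖ < ‖f (p, c)‖ + 1 := fun q hq t ht =>
    hball (q, t) (by rw [← ball_prod_same]; exact ⟨hq, ht⟩)
  have hunif := tendstoUniformlyOn_dslope (f := fun q t => f (q, t)) hr
    (fun q hq t ht => ((hgood q hq t ht).1.fun_comp' t (by fun_prop)).differentiableWithinAt)
    (fun q hq t ht => (hgood q hq t ht).2.le)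
  have hslice : ∀ t ∈ ball c r, DifferentiableOn ℂ (fun q => f (q, t)) (ball p r) :=
    fun t ht q hq => ((hgood q hq t ht).1.fun_comp' q (by fun_prop)).differentiableWithinAt
  refine differentiableAt_of_tendstoUniformlyOn_ball hr ?_ hunif
  filter_upwards [self_mem_nhdsWithin, nhdsWithin_le_nhds (ball_mem_nhds c hr)] with t hne ht
  simp only [dslope_of_ne _ hne, slope_def_module]
  exact ((hslice t ht).sub (hslice c (mem_ball_self hr))).const_smul _

theorem differentiableAt_fderiv_apply [CompleteSpace F] {f : E → F} {p : E}
    (hf : ∀ᶠ q in 𝓝 p, DifferentiableAt ℂ f q) (v : E) :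
    DifferentiableAt ℂ (fun q => fderiv ℂ f q v) p := by
  have htranslate : Tendsto (fun z : E × ℂ => z.1 + z.2 • v) (𝓝 (p, 0)) (𝓝 p) :=
    Continuous.tendsto' (by fun_prop) _ _ (by simp)
  have hline : DifferentiableAt ℂ (fun q => lineDeriv ℂ f q v) p :=
    differentiableAt_deriv_of_eventually (f := fun z => f (z.1 + z.2 • v)) <|
      (htranslate.eventually hf).mono fun z hz => hz.fun_comp' z (by fun_prop)
  exact hline.congr_of_eventuallyEq (hf.mono fun q hq => hq.lineDeriv_eq_fderiv.symm)

theorem contDiffOn_of_differentiableOn_complex [FiniteDimensional ℂ E] [CompleteSpace F]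
    {f : E → F} {s : Set E} (hs : IsOpen s) (hf : DifferentiableOn ℂ f s) (n : ℕ) :
    ContDiffOn ℂ n f s := by
  induction n generalizing f with
  | zero => exact contDiffOn_zero.2 hf.continuousOn
  | succ n ih =>
    rw [Nat.cast_succ, contDiffOn_succ_iff_fderiv_of_isOpen hs]
    refine ⟨hf, by simp, contDiffOn_clm_apply.2 fun v => ih fun p hp => ?_⟩
    exact (differentiableAt_fderiv_apply
      (hf.eventually_differentiableAt (hs.mem_nhds hp)) v).differentiableWithinAt

end SeveralVariables

section JetMatrix

variable {R : Type*} [CommRing R]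

/-- The linear form with coefficients `r`, evaluated at the homogeneous coordinates `(x, y, 1)`. -/
def affineForm (r : Fin 3 → R) (x y : R) : R := r 0 * x + r 1 * y + r 2

/-- The matrix with rows the jets `j`, `k` and the jet `(1, 0, 0)` of the constant function `1`;
its determinant specializes to the Jacobian and to the Wronskian of the derivatives. -/
def jetMatrix (j k : Fin 3 → R) : Matrix (Fin 3) (Fin 3) R := of ![j, k, ![1, 0, 0]]

/-- The matrix by which jets, as row vectors, are multiplied when functions are multiplied by one
with jet `d`. The entry `e` is `2 * d 1` for second order jets in one variable and `0` for first
order jets in two variables. -/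
def leibnizMatrix (d : Fin 3 → R) (e : R) : Matrix (Fin 3) (Fin 3) R :=
  !![d 0, d 1, d 2; 0, d 0, e; 0, 0, d 0]

lemma det_jetMatrix (j k : Fin 3 → R) : (jetMatrix j k).det = j 1 * k 2 - k 1 * j 2 := by
  simp [jetMatrix, det_fin_three]
  ring

lemma det_leibnizMatrix (d : Fin 3 → R) (e : R) : (leibnizMatrix d e).det = d 0 ^ 3 := by
  simp [leibnizMatrix, det_fin_three]
  ring

lemma vecMul_jetMatrix (r j k : Fin 3 → R) :
    r ᵥ* jetMatrix j k =
      ![affineForm r (j 0) (k 0), r 0 * j 1 + r 1 * k 1, r 0 * j 2 + r 1 * k 2] := by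
  ext i
  fin_cases i <;> simp [jetMatrix, affineForm, vecMul, dotProduct, Fin.sum_univ_three]

lemma vecMul_leibnizMatrix (j d : Fin 3 → R) (e : R) :
    j ᵥ* leibnizMatrix d e =
      ![j 0 * d 0, j 0 * d 1 + j 1 * d 0, j 0 * d 2 + j 1 * e + j 2 * d 0] := by
  ext i
  fin_cases i <;> simp [leibnizMatrix, vecMul, dotProduct, Fin.sum_univ_three]

lemma det_jetMatrix_mul_pow_three {γ : Matrix (Fin 3) (Fin 3) R} {j k J K d : Fin 3 → R} {e : R}
    (hJ : γ.row 0 ᵥ* jetMatrix j k = J ᵥ* leibnizMatrix d e)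
    (hK : γ.row 1 ᵥ* jetMatrix j k = K ᵥ* leibnizMatrix d e)
    (hd : γ.row 2 ᵥ* jetMatrix j k = d) :
    (jetMatrix J K).det * d 0 ^ 3 = γ.det * (jetMatrix j k).det := by
  have hone : ![1, 0, 0] ᵥ* leibnizMatrix d e = d := by
    ext i
    fin_cases i <;> simp [vecMul_leibnizMatrix]
  have hmul : jetMatrix J K * leibnizMatrix d e = γ * jetMatrix j k := by
    refine funext fun i => ?_
    rw [mul_apply_eq_vecMul, mul_apply_eq_vecMul]
    fin_cases i
    exacts [hJ.symm, hK.symm, hone.trans hd.symm]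
  rw [← det_leibnizMatrix d e, ← det_mul, hmul, det_mul]

end JetMatrix

section Jets

variable {𝕜 : Type*} [NontriviallyNormedField 𝕜] {E : Type*} [NormedAddCommGroup E]
  [NormedSpace 𝕜 E]

/-- The `i`-th homogeneous coordinate of `γ • [f : g : 1]` divided by the last one. The `γ` of the
paper acts on `(f, g)` through the coordinates `i = 0` and `i = 1`. -/
def projectiveCoord {X : Type*} (γ : Matrix (Fin 3) (Fin 3) 𝕜) (i : Fin 3) (f g : X → 𝕜)
    (x : X) : 𝕜 :=
  affineForm (γ.row i) (f x) (g x) / affineForm (γ.row 2) (f x) (g x)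

/-- The value and the first two derivatives of `f` at `t`, without factorials. -/
def secondOrderJet (f : 𝕜 → 𝕜) (t : 𝕜) : Fin 3 → 𝕜 := ![f t, deriv f t, iteratedDeriv 2 f t]

/-- The value of `f` at `p` and its derivatives in the directions `v` and `w`. -/
def firstOrderJet (v w : E) (f : E → 𝕜) (p : E) : Fin 3 → 𝕜 :=
  ![f p, fderiv 𝕜 f p v, fderiv 𝕜 f p w]

lemma contDiffAt_affineForm {n : WithTop ℕ∞} {f g : E → 𝕜} {p : E} (r : Fin 3 → 𝕜)
    (hf : ContDiffAt 𝕜 n f p) (hg : ContDiffAt 𝕜 n g p) :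
    ContDiffAt 𝕜 n (fun x => affineForm r (f x) (g x)) p := by
  unfold affineForm
  fun_prop

lemma differentiableAt_affineForm {f g : E → 𝕜} {p : E} (r : Fin 3 → 𝕜)
    (hf : DifferentiableAt 𝕜 f p) (hg : DifferentiableAt 𝕜 g p) :
    DifferentiableAt 𝕜 (fun x => affineForm r (f x) (g x)) p := by
  unfold affineForm
  fun_prop

lemma secondOrderJet_affineForm {f g : 𝕜 → 𝕜} {t : 𝕜} (r : Fin 3 → 𝕜)
    (hf : ContDiffAt 𝕜 2 f t) (hg : ContDiffAt 𝕜 2 g t) :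
    secondOrderJet (fun s => affineForm r (f s) (g s)) t =
      r ᵥ* jetMatrix (secondOrderJet f t) (secondOrderJet g t) := by
  have hf' : DifferentiableAt 𝕜 f t := hf.differentiableAt (by simp)
  have hg' : DifferentiableAt 𝕜 g t := hg.differentiableAt (by simp)
  have hderiv : deriv (fun s => affineForm r (f s) (g s)) t = r 0 * deriv f t + r 1 * deriv g t :=
    (((hf'.hasDerivAt.const_mul _).add (hg'.hasDerivAt.const_mul _)).add_const _).deriv
  have hderiv2 : iteratedDeriv 2 (fun s => affineForm r (f s) (g s)) t =
      r 0 * iteratedDeriv 2 f t + r 1 * iteratedDeriv 2 g t := by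
    unfold affineForm
    rw [iteratedDeriv_fun_add (by fun_prop) (by fun_prop),
      iteratedDeriv_fun_add (by fun_prop) (by fun_prop), iteratedDeriv_const_mul _ hf,
      iteratedDeriv_const_mul _ hg]
    simp [iteratedDeriv_const]
  simp [secondOrderJet, vecMul_jetMatrix, hderiv, hderiv2]

lemma secondOrderJet_mul {f g : 𝕜 → 𝕜} {t : 𝕜}
    (hf : ContDiffAt 𝕜 2 f t) (hg : ContDiffAt 𝕜 2 g t) :
    secondOrderJet (f * g) t =
      secondOrderJet f t ᵥ* leibnizMatrix (secondOrderJet g t) (2 * deriv g t) := by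
  have hderiv : deriv (f * g) t = f t * deriv g t + deriv f t * g t := by
    rw [deriv_mul (hf.differentiableAt (by simp)) (hg.differentiableAt (by simp)), add_comm]
  have hderiv2 : iteratedDeriv 2 (f * g) t =
      f t * iteratedDeriv 2 g t + deriv f t * (2 * deriv g t) + iteratedDeriv 2 f t * g t := by
    rw [iteratedDeriv_mul hf hg]
    simp [Finset.sum_range_succ]
    ring
  simp [secondOrderJet, vecMul_leibnizMatrix, hderiv, hderiv2]

lemma firstOrderJet_affineForm {f g : E → 𝕜} {p : E} (v w : E) (r : Fin 3 → 𝕜)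
    (hf : DifferentiableAt 𝕜 f p) (hg : DifferentiableAt 𝕜 g p) :
    firstOrderJet v w (fun x => affineForm r (f x) (g x)) p =
      r ᵥ* jetMatrix (firstOrderJet v w f p) (firstOrderJet v w g p) := by
  have hfderiv : fderiv 𝕜 (fun x => affineForm r (f x) (g x)) p =
      r 0 • fderiv 𝕜 f p + r 1 • fderiv 𝕜 g p :=
    (((hf.hasFDerivAt.const_mul _).add (hg.hasFDerivAt.const_mul _)).add_const _).fderiv
  simp [firstOrderJet, vecMul_jetMatrix, hfderiv]

lemma firstOrderJet_mul {f g : E → 𝕜} {p : E} (v w : E)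
    (hf : DifferentiableAt 𝕜 f p) (hg : DifferentiableAt 𝕜 g p) :
    firstOrderJet v w (f * g) p =
      firstOrderJet v w f p ᵥ* leibnizMatrix (firstOrderJet v w g p) 0 := by
  simp [firstOrderJet, vecMul_leibnizMatrix, fderiv_mul hf hg, mul_comm]

variable {γ : Matrix (Fin 3) (Fin 3) 𝕜}

lemma contDiffAt_projectiveCoord {n : WithTop ℕ∞} {f g : E → 𝕜} {p : E} (i : Fin 3)
    (hf : ContDiffAt 𝕜 n f p) (hg : ContDiffAt 𝕜 n g p)
    (hden : affineForm (γ.row 2) (f p) (g p) ≠ 0) :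
    ContDiffAt 𝕜 n (projectiveCoord γ i f g) p :=
  (contDiffAt_affineForm _ hf hg).div (contDiffAt_affineForm _ hf hg) hden

lemma differentiableAt_projectiveCoord {f g : E → 𝕜} {p : E} (i : Fin 3)
    (hf : DifferentiableAt 𝕜 f p) (hg : DifferentiableAt 𝕜 g p)
    (hden : affineForm (γ.row 2) (f p) (g p) ≠ 0) :
    DifferentiableAt 𝕜 (projectiveCoord γ i f g) p :=
  ((differentiableAt_affineForm (γ.row i) hf hg).mul
    ((differentiableAt_affineForm (γ.row 2) hf hg).inv hden)).congr_of_eventuallyEq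
      (.of_forall fun _ => div_eq_mul_inv _ _)

lemma projectiveCoord_mul_eventuallyEq {X : Type*} [TopologicalSpace X] {f g : X → 𝕜} {p : X}
    (i : Fin 3) (hf : ContinuousAt f p) (hg : ContinuousAt g p)
    (hden : affineForm (γ.row 2) (f p) (g p) ≠ 0) :
    (projectiveCoord γ i f g * fun x => affineForm (γ.row 2) (f x) (g x)) =ᶠ[nhds p]
      fun x => affineForm (γ.row i) (f x) (g x) := by
  have hcont : ContinuousAt (fun x => affineForm (γ.row 2) (f x) (g x)) p := by
    unfold affineForm
    fun_prop
  filter_upwards [hcont.eventually_ne hden] with x hx using div_mul_cancel₀ _ hx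

theorem det_secondOrderJet_projectiveCoord {f g : 𝕜 → 𝕜} {t : 𝕜}
    (hf : ContDiffAt 𝕜 2 f t) (hg : ContDiffAt 𝕜 2 g t)
    (hden : affineForm (γ.row 2) (f t) (g t) ≠ 0) :
    (jetMatrix (secondOrderJet (projectiveCoord γ 0 f g) t)
          (secondOrderJet (projectiveCoord γ 1 f g) t)).det *
        affineForm (γ.row 2) (f t) (g t) ^ 3 =
      γ.det * (jetMatrix (secondOrderJet f t) (secondOrderJet g t)).det := by
  have hrow (i : Fin 3) : γ.row i ᵥ* jetMatrix (secondOrderJet f t) (secondOrderJet g t) =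
      secondOrderJet (projectiveCoord γ i f g) t ᵥ*
        leibnizMatrix (secondOrderJet (fun s => affineForm (γ.row 2) (f s) (g s)) t)
          (2 * deriv (fun s => affineForm (γ.row 2) (f s) (g s)) t) := by
    rw [← secondOrderJet_affineForm _ hf hg, ← secondOrderJet_mul
      (contDiffAt_projectiveCoord i hf hg hden) (contDiffAt_affineForm _ hf hg)]
    have heq := projectiveCoord_mul_eventuallyEq i hf.continuousAt hg.continuousAt hden
    simp only [secondOrderJet, heq.eq_of_nhds, heq.deriv_eq, heq.iteratedDeriv_eq]
  exact det_jetMatrix_mul_pow_three (hrow 0) (hrow 1) (secondOrderJet_affineForm _ hf hg).symm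

theorem det_firstOrderJet_projectiveCoord {f g : E → 𝕜} {p : E} (v w : E)
    (hf : DifferentiableAt 𝕜 f p) (hg : DifferentiableAt 𝕜 g p)
    (hden : affineForm (γ.row 2) (f p) (g p) ≠ 0) :
    (jetMatrix (firstOrderJet v w (projectiveCoord γ 0 f g) p)
          (firstOrderJet v w (projectiveCoord γ 1 f g) p)).det *
        affineForm (γ.row 2) (f p) (g p) ^ 3 =
      γ.det * (jetMatrix (firstOrderJet v w f p) (firstOrderJet v w g p)).det := by
  have hrow (i : Fin 3) : γ.row i ᵥ* jetMatrix (firstOrderJet v w f p) (firstOrderJet v w g p) =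
      firstOrderJet v w (projectiveCoord γ i f g) p ᵥ*
        leibnizMatrix (firstOrderJet v w (fun x => affineForm (γ.row 2) (f x) (g x)) p) 0 := by
    rw [← firstOrderJet_affineForm _ _ _ hf hg, ← firstOrderJet_mul _ _
      (differentiableAt_projectiveCoord i hf hg hden) (differentiableAt_affineForm _ hf hg)]
    have heq := projectiveCoord_mul_eventuallyEq i hf.continuousAt hg.continuousAt hden
    simp only [firstOrderJet, heq.eq_of_nhds, heq.fderiv_eq]
  exact det_jetMatrix_mul_pow_three (hrow 0) (hrow 1) (firstOrderJet_affineForm _ _ _ hf hg).symm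

end Jets

section SecondDerivatives

variable {𝕜 : Type*} [NontriviallyNormedField 𝕜] {E : Type*} [NormedAddCommGroup E]
  [NormedSpace 𝕜 E] {F : Type*} [NormedAddCommGroup F] [NormedSpace 𝕜 F]

lemma hasFDerivAt_fderiv_apply {f : E → F} {p : E} (hf : ContDiffAt 𝕜 2 f p) (v : E) :
    HasFDerivAt (fun q => fderiv 𝕜 f q v) ((fderiv 𝕜 (fderiv 𝕜 f) p).flip v) p := by
  have hdiff : DifferentiableAt 𝕜 (fderiv 𝕜 f) p :=
    (hf.fderiv_right (m := 1) (by norm_num)).differentiableAt one_ne_zero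
  simpa using hdiff.hasFDerivAt.clm_apply (hasFDerivAt_const v p)

lemma contDiffAt_comp_line {n : WithTop ℕ∞} {f : E → F} {p : E} (hf : ContDiffAt 𝕜 n f p)
    (v : E) : ContDiffAt 𝕜 n (fun t : 𝕜 => f (p + t • v)) 0 :=
  ContDiffAt.fun_comp 0 (by simpa using hf) (by fun_prop)

lemma secondOrderJet_comp_line {f : E → 𝕜} {p : E} (hf : ContDiffAt 𝕜 2 f p) (v : E) :
    secondOrderJet (fun t : 𝕜 => f (p + t • v)) 0 =
      ![f p, fderiv 𝕜 f p v, fderiv 𝕜 (fderiv 𝕜 f) p v v] := by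
  have hline (t : 𝕜) : HasDerivAt (fun s : 𝕜 => p + s • v) v t := by
    simpa using ((hasDerivAt_id t).smul_const v).const_add p
  have hzero : p + (0 : 𝕜) • v = p := by simp
  have hdiff : ∀ᶠ q in nhds p, DifferentiableAt 𝕜 f q :=
    (hf.eventually (by simp)).mono fun q hq => hq.differentiableAt (by simp)
  have hderiv : deriv (fun t : 𝕜 => f (p + t • v)) =ᶠ[nhds 0]
      fun t => fderiv 𝕜 f (p + t • v) v := by
    have hdiff_line : ∀ᶠ t : 𝕜 in nhds 0, DifferentiableAt 𝕜 f (p + t • v) :=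
      (hline 0).continuousAt.eventually (by simpa only [hzero] using hdiff)
    filter_upwards [hdiff_line] with t ht using (ht.hasFDerivAt.comp_hasDerivAt t (hline t)).deriv
  have hderiv2 : deriv (fun t : 𝕜 => fderiv 𝕜 f (p + t • v) v) 0 =
      fderiv 𝕜 (fderiv 𝕜 f) p v v := by
    have hsecond := hasFDerivAt_fderiv_apply hf v
    rw [← hzero] at hsecond
    refine (hsecond.comp_hasDerivAt 0 (hline 0)).deriv.trans ?_
    rw [hzero, ContinuousLinearMap.flip_apply]
  simp only [secondOrderJet, iteratedDeriv_succ, iteratedDeriv_zero, hderiv.deriv_eq,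
    hderiv.eq_of_nhds, hderiv2, hzero]

end SecondDerivatives

section PartialDerivatives

variable {u : ℂ × ℂ → ℂ} {p : ℂ × ℂ}

lemma pdx_eq_fderiv (hu : DifferentiableAt ℂ u p) : pdx u p = fderiv ℂ u p (1, 0) :=
  (hu.hasFDerivAt.comp_hasDerivAt p.1
    ((hasDerivAt_id p.1).prodMk (hasDerivAt_const p.1 p.2))).deriv

lemma pdy_eq_fderiv (hu : DifferentiableAt ℂ u p) : pdy u p = fderiv ℂ u p (0, 1) :=
  (hu.hasFDerivAt.comp_hasDerivAt p.2
    ((hasDerivAt_const p.2 p.1).prodMk (hasDerivAt_id p.2))).deriv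

lemma fderiv_apply_eq_pdx_add_pdy (hu : DifferentiableAt ℂ u p) (α β : ℂ) :
    fderiv ℂ u p (α, β) = α * pdx u p + β * pdy u p := by
  have hvec : (α, β) = α • ((1, 0) : ℂ × ℂ) + β • ((0, 1) : ℂ × ℂ) := by simp
  simp only [hvec, map_add, map_smul, smul_eq_mul, pdx_eq_fderiv hu, pdy_eq_fderiv hu]

lemma hasFDerivAt_pdx (hu : ContDiffAt ℂ 2 u p) :
    HasFDerivAt (pdx u) ((fderiv ℂ (fderiv ℂ u) p).flip (1, 0)) p :=
  (hasFDerivAt_fderiv_apply hu (1, 0)).congr_of_eventuallyEq <|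
    (hu.eventually (by simp)).mono fun _ hq => pdx_eq_fderiv (hq.differentiableAt (by simp))

lemma hasFDerivAt_pdy (hu : ContDiffAt ℂ 2 u p) :
    HasFDerivAt (pdy u) ((fderiv ℂ (fderiv ℂ u) p).flip (0, 1)) p :=
  (hasFDerivAt_fderiv_apply hu (0, 1)).congr_of_eventuallyEq <|
    (hu.eventually (by simp)).mono fun _ hq => pdy_eq_fderiv (hq.differentiableAt (by simp))

lemma fderiv_fderiv_apply_self (hu : ContDiffAt ℂ 2 u p) (α β : ℂ) :
    fderiv ℂ (fderiv ℂ u) p (α, β) (α, β) =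
      α ^ 2 * pdx (pdx u) p + 2 * α * β * pdx (pdy u) p + β ^ 2 * pdy (pdy u) p := by
  have hvec : (α, β) = α • ((1, 0) : ℂ × ℂ) + β • ((0, 1) : ℂ × ℂ) := by simp
  have hsymm := hu.isSymmSndFDerivAt (by simp) (1, 0) (0, 1)
  have hx := hasFDerivAt_pdx hu
  have hy := hasFDerivAt_pdy hu
  rw [pdx_eq_fderiv hx.differentiableAt, pdx_eq_fderiv hy.differentiableAt,
    pdy_eq_fderiv hy.differentiableAt, hx.fderiv, hy.fderiv]
  simp only [ContinuousLinearMap.flip_apply, hvec, map_add, map_smul, smul_eq_mul,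
    _root_.add_apply, _root_.smul_apply, hsymm]
  ring

end PartialDerivatives

lemma binaryCubic_coeff_eq {R : Type*} [CommRing R] [IsDomain R] (h2 : (2 : R) ≠ 0)
    {a b c d a' b' c' d' : R}
    (h : ∀ x y : R, a * x ^ 3 + b * x ^ 2 * y - c * x * y ^ 2 - d * y ^ 3 =
      a' * x ^ 3 + b' * x ^ 2 * y - c' * x * y ^ 2 - d' * y ^ 3) :
    a = a' ∧ b = b' ∧ c = c' ∧ d = d' := by
  have ha : a = a' := by simpa using h 1 0
  have hd : d = d' := by simpa using h 0 1
  have hpos := h 1 1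
  have hneg := h 1 (-1)
  refine ⟨ha, mul_left_cancel₀ h2 ?_, mul_left_cancel₀ h2 ?_, hd⟩ <;> grind

section CubicForm

variable {u₁ u₂ : ℂ × ℂ → ℂ} {p : ℂ × ℂ}

/-- The binary cubic form with the four GL(3) derivatives as coefficients, signed so that
`J(u₁, u₂)` times it is the Wronskian of the derivatives of `u₁`, `u₂` along `(α, β)`. -/
def cubicForm (u₁ u₂ : ℂ × ℂ → ℂ) (p : ℂ × ℂ) (α β : ℂ) : ℂ :=
  brX u₁ u₂ p * α ^ 3 + sqX u₁ u₂ p * α ^ 2 * β - sqY u₁ u₂ p * α * β ^ 2 - brY u₁ u₂ p * β ^ 3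

lemma Jac_eq_det (hu₁ : DifferentiableAt ℂ u₁ p) (hu₂ : DifferentiableAt ℂ u₂ p) :
    Jac u₁ u₂ p =
      (jetMatrix (firstOrderJet (1, 0) (0, 1) u₁ p) (firstOrderJet (1, 0) (0, 1) u₂ p)).det := by
  simp [Jac, det_jetMatrix, firstOrderJet, pdx_eq_fderiv, pdy_eq_fderiv, hu₁, hu₂]

theorem det_secondOrderJet_comp_line (hu₁ : ContDiffAt ℂ 2 u₁ p) (hu₂ : ContDiffAt ℂ 2 u₂ p)
    (hJ : Jac u₁ u₂ p ≠ 0) (α β : ℂ) :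
    (jetMatrix (secondOrderJet (fun t : ℂ => u₁ (p + t • (α, β))) 0)
        (secondOrderJet (fun t : ℂ => u₂ (p + t • (α, β))) 0)).det =
      Jac u₁ u₂ p * cubicForm u₁ u₂ p α β := by
  rw [det_jetMatrix, secondOrderJet_comp_line hu₁, secondOrderJet_comp_line hu₂,
    fderiv_fderiv_apply_self hu₁, fderiv_fderiv_apply_self hu₂,
    fderiv_apply_eq_pdx_add_pdy (hu₁.differentiableAt (by simp)),
    fderiv_apply_eq_pdx_add_pdy (hu₂.differentiableAt (by simp))]
  simp only [cubicForm, brX, brY, sqX, sqY, cons_val]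
  field_simp
  ring

variable {γ : Matrix (Fin 3) (Fin 3) ℂ}

theorem Jac_projectiveCoord_mul_pow_three (hu₁ : DifferentiableAt ℂ u₁ p)
    (hu₂ : DifferentiableAt ℂ u₂ p) (hden : affineForm (γ.row 2) (u₁ p) (u₂ p) ≠ 0) :
    Jac (projectiveCoord γ 0 u₁ u₂) (projectiveCoord γ 1 u₁ u₂) p *
        affineForm (γ.row 2) (u₁ p) (u₂ p) ^ 3 = γ.det * Jac u₁ u₂ p := by
  rw [Jac_eq_det hu₁ hu₂, Jac_eq_det (differentiableAt_projectiveCoord 0 hu₁ hu₂ hden)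
    (differentiableAt_projectiveCoord 1 hu₁ hu₂ hden)]
  exact det_firstOrderJet_projectiveCoord _ _ hu₁ hu₂ hden

theorem Jac_projectiveCoord (hu₁ : DifferentiableAt ℂ u₁ p)
    (hu₂ : DifferentiableAt ℂ u₂ p) (hden : affineForm (γ.row 2) (u₁ p) (u₂ p) ≠ 0) :
    Jac (projectiveCoord γ 0 u₁ u₂) (projectiveCoord γ 1 u₁ u₂) p =
      γ.det * (affineForm (γ.row 2) (u₁ p) (u₂ p))⁻¹ ^ 3 * Jac u₁ u₂ p := by
  field_simp
  exact Jac_projectiveCoord_mul_pow_three hu₁ hu₂ hden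

theorem cubicForm_projectiveCoord (hu₁ : ContDiffAt ℂ 2 u₁ p) (hu₂ : ContDiffAt ℂ 2 u₂ p)
    (hJ : Jac u₁ u₂ p ≠ 0) (hγ : γ.det ≠ 0) (hden : affineForm (γ.row 2) (u₁ p) (u₂ p) ≠ 0) :
    cubicForm (projectiveCoord γ 0 u₁ u₂) (projectiveCoord γ 1 u₁ u₂) p = cubicForm u₁ u₂ p := by
  ext α β
  have hJac := Jac_projectiveCoord_mul_pow_three (hu₁.differentiableAt (by simp))
    (hu₂.differentiableAt (by simp)) hden
  have hJac_ne : Jac (projectiveCoord γ 0 u₁ u₂) (projectiveCoord γ 1 u₁ u₂) p ≠ 0 :=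
    left_ne_zero_of_mul (hJac ▸ mul_ne_zero hγ hJ)
  have hline := det_secondOrderJet_projectiveCoord (γ := γ) (contDiffAt_comp_line hu₁ (α, β))
    (contDiffAt_comp_line hu₂ (α, β)) (by simpa using hden)
  rw [det_secondOrderJet_comp_line hu₁ hu₂ hJ, zero_smul, add_zero] at hline
  refine mul_left_cancel₀ (mul_ne_zero hγ hJ) ?_
  set v₁ := projectiveCoord γ 0 u₁ u₂
  set v₂ := projectiveCoord γ 1 u₁ u₂
  calc γ.det * Jac u₁ u₂ p * cubicForm v₁ v₂ p α β
      = Jac v₁ v₂ p * cubicForm v₁ v₂ p α β * affineForm (γ.row 2) (u₁ p) (u₂ p) ^ 3 := by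
        rw [← hJac, mul_right_comm]
    _ = γ.det * (Jac u₁ u₂ p * cubicForm u₁ u₂ p α β) := by
        rw [← hline, ← det_secondOrderJet_comp_line (contDiffAt_projectiveCoord 0 hu₁ hu₂ hden)
          (contDiffAt_projectiveCoord 1 hu₁ hu₂ hden) hJac_ne]
        -- `projectiveCoord` is pointwise, so it commutes with restriction to a line.
        rfl
    _ = γ.det * Jac u₁ u₂ p * cubicForm u₁ u₂ p α β := (mul_assoc _ _ _).symm

end CubicForm

/-- Invariance of the four GL(3) derivatives under a linear fractional
transformation of the first arguments, together with the transformation law for the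
Jacobian. -/
theorem statement0 (Ω : Set (ℂ × ℂ)) (hΩ : IsOpen Ω)
    (u₁ u₂ : ℂ × ℂ → ℂ)
    (hu₁ : DifferentiableOn ℂ u₁ Ω) (hu₂ : DifferentiableOn ℂ u₂ Ω)
    (hJ : ∀ p ∈ Ω, Jac u₁ u₂ p ≠ 0)
    (a₁ a₂ a₃ b₁ b₂ b₃ c₁ c₂ c₃ : ℂ)
    (hdet : a₁ * (b₂ * c₃ - b₃ * c₂) - a₂ * (b₁ * c₃ - b₃ * c₁)
        + a₃ * (b₁ * c₂ - b₂ * c₁) ≠ 0)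
    (hden : ∀ p ∈ Ω, c₁ * u₁ p + c₂ * u₂ p + c₃ ≠ 0)
    (v₁ v₂ : ℂ × ℂ → ℂ)
    (hv₁ : v₁ = fun p => (a₁ * u₁ p + a₂ * u₂ p + a₃) / (c₁ * u₁ p + c₂ * u₂ p + c₃))
    (hv₂ : v₂ = fun p => (b₁ * u₁ p + b₂ * u₂ p + b₃) / (c₁ * u₁ p + c₂ * u₂ p + c₃)) :
    ∀ p ∈ Ω,
      Jac v₁ v₂ p =
        (a₁ * (b₂ * c₃ - b₃ * c₂) - a₂ * (b₁ * c₃ - b₃ * c₁)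
          + a₃ * (b₁ * c₂ - b₂ * c₁)) * ((c₁ * u₁ p + c₂ * u₂ p + c₃)⁻¹) ^ 3
          * Jac u₁ u₂ p ∧
      Jac v₁ v₂ p ≠ 0 ∧
      brX v₁ v₂ p = brX u₁ u₂ p ∧
      brY v₁ v₂ p = brY u₁ u₂ p ∧
      sqX v₁ v₂ p = sqX u₁ u₂ p ∧
      sqY v₁ v₂ p = sqY u₁ u₂ p := by
  intro p hp
  subst hv₁ hv₂
  have hsmooth {u : ℂ × ℂ → ℂ} (hu : DifferentiableOn ℂ u Ω) : ContDiffAt ℂ 2 u p :=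
    (contDiffOn_of_differentiableOn_complex hΩ hu 2).contDiffAt (hΩ.mem_nhds hp)
  have hdiff {u : ℂ × ℂ → ℂ} (hu : DifferentiableOn ℂ u Ω) : DifferentiableAt ℂ u p :=
    hu.differentiableAt (hΩ.mem_nhds hp)
  let γ : Matrix (Fin 3) (Fin 3) ℂ := !![a₁, a₂, a₃; b₁, b₂, b₃; c₁, c₂, c₃]
  have hγ : γ.det = a₁ * (b₂ * c₃ - b₃ * c₂) - a₂ * (b₁ * c₃ - b₃ * c₁)
      + a₃ * (b₁ * c₂ - b₂ * c₁) := by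
    simp only [γ, det_fin_three, of_apply, cons_val]
    ring
  have hJac := Jac_projectiveCoord (γ := γ) (hdiff hu₁) (hdiff hu₂) (hden p hp)
  have hcubic := cubicForm_projectiveCoord (γ := γ) (hsmooth hu₁) (hsmooth hu₂) (hJ p hp)
    (hγ ▸ hdet) (hden p hp)
  obtain ⟨hbrX, hsqX, hsqY, hbrY⟩ :=
    binaryCubic_coeff_eq two_ne_zero fun α β => congrFun₂ hcubic α β
  rw [hγ] at hJac
  exact ⟨hJac, hJac ▸ mul_ne_zero (mul_ne_zero hdet (pow_ne_zero 3 (inv_ne_zero (hden p hp))))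
    (hJ p hp), hbrX, hbrY, hsqX, hsqY⟩
end
end

section
/- (Linear fractional change of the second arguments.) Let γ ∈ GL(3,ℂ) with rows (a₁,a₂,a₃),(b₁,b₂,b₃),(c₁,c₂,c₃), Δ := det(γ), and on the set c₁x+c₂y+c₃ ≠ 0 define w₁ := (a₁x+a₂y+a₃)/(c₁x+c₂y+c₃), w₂ := (b₁x+b₂y+b₃)/(c₁x+c₂y+c₃), and set A₁ := (a₁c₂−a₂c₁)y + (a₁c₃−a₃c₁), A₂ := (a₂c₁−a₁c₂)x + (a₂c₃−a₃c₂), B₁ := (b₁c₂−b₂c₁)y + (b₁c₃−b₃c₁), B₂ := (b₂c₁−b₁c₂)x + (b₂c₃−b₃c₂). Let u₁,u₂ be holomorphic functions of (w₁,w₂) with J(u₁,u₂) ≠ 0, and let ũᵢ(x,y) := uᵢ(w₁,w₂). Then the column vector ({ũ₁,ũ₂;x,y}ₓ, {ũ₁,ũ₂;x,y}ᵧ, [ũ₁,ũ₂;x,y]ₓ, [ũ₁,ũ₂;x,y]ᵧ)ᵀ equals (Δ·(c₁x+c₂y+c₃)³)⁻¹ times the 4×4 matrix with rows (A₁³, −B₁³,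 A₁²B₁, −A₁B₁²), (−A₂³, B₂³, −A₂²B₂, A₂B₂²), (3A₁²A₂, −3B₁²B₂, A₁²B₂+2A₁B₁A₂, −(B₁²A₂+2A₁B₁B₂)), (−3A₁A₂², 3B₁B₂², −(B₁A₂²+2A₁A₂B₂), A₁B₂²+2B₁A₂B₂) applied to the column vector ({u₁,u₂;w₁,w₂}_{w₁}, {u₁,u₂;w₁,w₂}_{w₂}, [u₁,u₂;w₁,w₂]_{w₁}, [u₁,u₂;w₁,w₂]_{w₂})ᵀ evaluated at (w₁,w₂). -/
open Complex Matrix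

noncomputable section

/-- The 4×4 matrix `M(w₁,w₂;x,y)` built from the first partial derivatives of
the holomorphic map `(w₁,w₂)`. -/
def Mmat (w₁ w₂ : ℂ × ℂ → ℂ) (p : ℂ × ℂ) : Matrix (Fin 4) (Fin 4) ℂ :=
  !![(pdx w₁ p) ^ 3, -(pdx w₂ p) ^ 3, (pdx w₁ p) ^ 2 * pdx w₂ p,
        -(pdx w₁ p) * (pdx w₂ p) ^ 2;
     -(pdy w₁ p) ^ 3, (pdy w₂ p) ^ 3, -(pdy w₁ p) ^ 2 * pdy w₂ p,
        (pdy w₁ p) * (pdy w₂ p) ^ 2;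
     3 * (pdx w₁ p) ^ 2 * pdy w₁ p, -3 * (pdx w₂ p) ^ 2 * pdy w₂ p,
        (pdx w₁ p) ^ 2 * pdy w₂ p + 2 * pdx w₁ p * pdx w₂ p * pdy w₁ p,
        -(pdx w₂ p) ^ 2 * pdy w₁ p - 2 * pdx w₁ p * pdx w₂ p * pdy w₂ p;
     -3 * pdx w₁ p * (pdy w₁ p) ^ 2, 3 * pdx w₂ p * (pdy w₂ p) ^ 2,
        -(pdx w₂ p) * (pdy w₁ p) ^ 2 - 2 * pdx w₁ p * pdy w₁ p * pdy w₂ p,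
        (pdx w₁ p) * (pdy w₂ p) ^ 2 + 2 * pdx w₂ p * pdy w₁ p * pdy w₂ p]

/-- The column vector of the four GL(3) derivatives of the pair `(u₁,u₂)`. -/
def Vvec (u₁ u₂ : ℂ × ℂ → ℂ) (p : ℂ × ℂ) : Fin 4 → ℂ :=
  ![brX u₁ u₂ p, brY u₁ u₂ p, sqX u₁ u₂ p, sqY u₁ u₂ p]

/-!
Put `D(v) = det (∂ᵥu, ∂ᵥ²u) / J(u)` for the second directional derivative along a constant vector
`v = (s, t)`. This is a binary cubic form in `v`, and the four GL(3) derivatives are its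
coefficients up to sign: `D(s, t) = {}ₓ s³ + []ₓ s² t - []ᵧ s t² - {}ᵧ t³`. By the chain rule
`∂ᵥ²(u ∘ w) = u'' (∂ᵥw, ∂ᵥw) + u' (∂ᵥ²w)`, so the form of `u ∘ w` is the form of `u` evaluated at
`∂ᵥw` and divided by `J(w)`, plus the form of `w` itself. The first summand yields the matrix: it
is the action of a linear substitution on binary cubics. A linear fractional map sends lines to
lines, so `∂ᵥ²w` is parallel to `∂ᵥw` and the second summand vanishes; moreover
`J(w) = Δ / (c₁ x + c₂ y + c₃)³`.

The chain rule needs `u` to be `C²`, while holomorphy only gives a complex derivative. Cauchy's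
estimate in balls makes that derivative continuous, so the difference quotients converge locally
uniformly to the directional derivatives, which are therefore holomorphic again.
-/

section StrictDerivative

open Filter Topology

variable {𝕜 E F : Type*} [NontriviallyNormedField 𝕜] [NormedAddCommGroup E] [NormedSpace 𝕜 E]
  [NormedAddCommGroup F] [NormedSpace 𝕜 F]

theorem tendsto_inv_smul_sub_of_hasStrictFDerivAt {f : E → F} {p : E} {f' : E →L[𝕜] F}
    (hf : HasStrictFDerivAt f f' p) (v : E) :
    Tendsto (fun x : 𝕜 × E => x.1⁻¹ • (f (x.2 + x.1 • v) - f x.2)) (𝓝[≠] 0 ×ˢ 𝓝 p)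
      (𝓝 (f' v)) := by
  have hfst : Tendsto Prod.fst (𝓝[≠] (0 : 𝕜) ×ˢ 𝓝 p) (𝓝 0) :=
    tendsto_fst.mono_right nhdsWithin_le_nhds
  have hpair : Tendsto (fun x : 𝕜 × E => (x.2 + x.1 • v, x.2)) (𝓝[≠] 0 ×ˢ 𝓝 p) (𝓝 (p, p)) := by
    refine Tendsto.prodMk_nhds ?_ tendsto_snd
    simpa using tendsto_snd.add (hfst.smul_const v)
  have hlittle : (fun x : 𝕜 × E => f (x.2 + x.1 • v) - f x.2 - f' (x.1 • v))
      =o[𝓝[≠] 0 ×ˢ 𝓝 p] Prod.fst := by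
    refine (hf.isLittleO.comp_tendsto hpair).congr_left (fun x => by simp) |>.trans_isBigO ?_
    refine .of_bound ‖v‖ (.of_forall fun x => ?_)
    simp [norm_smul, mul_comm]
  have hlim := hlittle.tendsto_inv_smul_nhds_zero.add_const (f' v)
  rw [zero_add] at hlim
  refine hlim.congr' ?_
  filter_upwards [tendsto_fst.eventually (self_mem_nhdsWithin (s := {0}ᶜ))] with x hx
  rw [smul_sub, map_smul, inv_smul_smul₀ hx, sub_add_cancel]

end StrictDerivative

section SeveralComplexVariables

open Filter Metric Topology

variable {E F : Type*} [NormedAddCommGroup E] [NormedSpace ℂ E]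
  [NormedAddCommGroup F] [NormedSpace ℂ F] {f : E → F} {s : Set E}

theorem norm_fderiv_le_of_forall_mem_ball_norm_le {c : E} {r M : ℝ} (hr : 0 < r)
    (hf : DifferentiableOn ℂ f (ball c r)) (hM : ∀ z ∈ ball c r, ‖f z‖ ≤ M) :
    ‖fderiv ℂ f c‖ ≤ 2 * M / r := by
  refine norm_fderiv_le_div_of_mapsTo_ball hf (fun z hz => ?_) hr
  calc dist (f z) (f c) ≤ ‖f z‖ + ‖f c‖ := dist_le_norm_add_norm _ _
    _ ≤ 2 * M := by linarith [hM z hz, hM c (mem_ball_self hr)]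

-- Cauchy's estimate for the first-order Taylor remainder at `p`, whose derivative at `q` is
-- `fderiv ℂ f q - fderiv ℂ f p`.
theorem continuousOn_fderiv_of_differentiableOn (hf : DifferentiableOn ℂ f s) (hs : IsOpen s) :
    ContinuousOn (fderiv ℂ f) s := by
  intro p hp
  refine ContinuousAt.continuousWithinAt (Metric.continuousAt_iff'.2 fun ε hε => ?_)
  set L := fderiv ℂ f p
  have hremainder : ∀ᶠ z in 𝓝 p, ‖f z - f p - L (z - p)‖ ≤ ε / 8 * ‖z - p‖ :=
    (hf.differentiableAt (hs.mem_nhds hp)).hasFDerivAt.isLittleO.def (by positivity)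
  obtain ⟨r, hr, hball⟩ := Metric.eventually_nhds_iff_ball.1 (hremainder.and (hs.mem_nhds hp))
  filter_upwards [ball_mem_nhds p (half_pos hr)] with q hq
  have hsub : ball q (r / 2) ⊆ ball p r :=
    ball_subset_ball' (by linarith [mem_ball.1 hq])
  have hdiff : ∀ z ∈ ball q (r / 2), DifferentiableAt ℂ f z := fun z hz =>
    hf.differentiableAt (hs.mem_nhds (hball z (hsub hz)).2)
  have hL : ∀ z, HasFDerivAt (fun z => L (z - p)) L z := fun z =>
    L.hasFDerivAt.comp z ((hasFDerivAt_id z).sub_const p)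
  have hderiv : fderiv ℂ (fun z => f z - f p - L (z - p)) q = fderiv ℂ f q - L :=
    (((hdiff q (mem_ball_self (half_pos hr))).hasFDerivAt.sub_const (f p)).fun_sub (hL q)).fderiv
  have hcauchy := norm_fderiv_le_of_forall_mem_ball_norm_le
    (f := fun z => f z - f p - L (z - p)) (M := ε / 8 * r) (half_pos hr)
    (fun z hz => (((hdiff z hz).sub_const _).fun_sub
      (hL z).differentiableAt).differentiableWithinAt)
    (fun z hz => (hball z (hsub hz)).1.trans
      (by gcongr; exact (mem_ball_iff_norm.1 (hsub hz)).le))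
  rw [dist_eq_norm, ← hderiv]
  refine hcauchy.trans_lt ?_
  field_simp
  norm_num

theorem uniformCauchySeqOn_fderiv_ball {ι : Type*} {l : Filter ι} {u : ι → E → F} {p : E} {r : ℝ}
    (hr : 0 < r) (hu : ∀ᶠ i in l, DifferentiableOn ℂ (u i) (ball p (2 * r)))
    (hcauchy : UniformCauchySeqOn u l (ball p (2 * r))) :
    UniformCauchySeqOn (fun i => fderiv ℂ (u i)) l (ball p r) := by
  rw [SeminormedAddGroup.uniformCauchySeqOn_iff_tendstoUniformlyOn_zero,
    Metric.tendstoUniformlyOn_iff] at *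
  simp only [Pi.zero_apply, dist_zero_left, neg_add_eq_sub] at *
  intro ε hε
  filter_upwards [hcauchy (ε * r / 4) (by positivity), hu.prod_mk hu]
    with ⟨i, j⟩ hij ⟨hui, huj⟩ q hq
  have hsub : ball q r ⊆ ball p (2 * r) := ball_subset_ball' (by linarith [mem_ball.1 hq])
  have hq' : ball p (2 * r) ∈ 𝓝 q := isOpen_ball.mem_nhds (hsub (mem_ball_self hr))
  rw [← fderiv_sub (huj.differentiableAt hq') (hui.differentiableAt hq')]
  calc ‖fderiv ℂ (u j - u i) q‖ ≤ 2 * (ε * r / 4) / r :=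
        norm_fderiv_le_of_forall_mem_ball_norm_le hr ((huj.sub hui).mono hsub)
          fun z hz => (hij z (hsub hz)).le
    _ = ε / 2 := by field_simp; norm_num
    _ < ε := half_lt_self hε

theorem differentiableOn_of_tendstoUniformlyOn [CompleteSpace F] {ι : Type*} {l : Filter ι}
    [l.NeBot] {u : ι → E → F} (hlim : TendstoUniformlyOn u f l s)
    (hu : ∀ᶠ i in l, DifferentiableOn ℂ (u i) s) (hs : IsOpen s) :
    DifferentiableOn ℂ f s := by
  intro p hp
  obtain ⟨R, hR, hball⟩ := Metric.isOpen_iff.1 hs p hp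
  obtain ⟨r, hr, rfl⟩ : ∃ r > 0, R = 2 * r := ⟨R / 2, half_pos hR, by ring⟩
  have hcauchy := uniformCauchySeqOn_fderiv_ball hr (hu.mono fun i hi => hi.mono hball)
    (hlim.mono hball).uniformCauchySeqOn
  choose! f' hf' using fun q (hq : q ∈ ball p r) =>
    cauchy_map_iff_exists_tendsto.1 (hcauchy.cauchy_map hq)
  have hderiv : HasFDerivAt f (f' p) p := by
    refine hasFDerivAt_of_tendstoUniformlyOnFilter (l := l) (f := u) (f' := fun i => fderiv ℂ (u i))
      ((hcauchy.tendstoUniformlyOn_of_tendsto hf').tendstoUniformlyOnFilter.mono_right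
        (le_principal_iff.2 (ball_mem_nhds p hr))) ?_ ?_
    · filter_upwards [hu.prod_mk (hs.mem_nhds hp)] with n ⟨hn, hns⟩
      exact (hn.differentiableAt (hs.mem_nhds hns)).hasFDerivAt
    · filter_upwards [hs.mem_nhds hp] with q hq using hlim.tendsto_at hq
  exact hderiv.differentiableAt.differentiableWithinAt

theorem tendstoLocallyUniformlyOn_inv_smul_sub (hf : DifferentiableOn ℂ f s) (hs : IsOpen s)
    (v : E) :
    TendstoLocallyUniformlyOn (fun (t : ℂ) q => t⁻¹ • (f (q + t • v) - f q))
      (fun q => fderiv ℂ f q v) (𝓝[≠] 0) s := by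
  refine hs.tendstoLocallyUniformlyOn_iff_forall_tendsto.2 fun p hp => ?_
  have hcont : ContinuousAt (fderiv ℂ f) p :=
    (continuousOn_fderiv_of_differentiableOn hf hs).continuousAt (hs.mem_nhds hp)
  have hstrict : HasStrictFDerivAt f (fderiv ℂ f p) p :=
    hasStrictFDerivAt_of_hasFDerivAt_of_continuousAt
      ((hs.eventually_mem hp).mono fun q hq => hf.hasFDerivAt (hs.mem_nhds hq)) hcont
  have hlim : Tendsto (fun x : ℂ × E => fderiv ℂ f x.2 v) (𝓝[≠] 0 ×ˢ 𝓝 p)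
      (𝓝 (fderiv ℂ f p v)) :=
    (hcont.clm_apply continuousAt_const).tendsto.comp tendsto_snd
  exact (hlim.prodMk_nhds (tendsto_inv_smul_sub_of_hasStrictFDerivAt hstrict v)).mono_right
    (nhds_le_uniformity _)

theorem differentiableOn_fderiv_apply_const [FiniteDimensional ℂ E] [CompleteSpace F]
    (hf : DifferentiableOn ℂ f s) (hs : IsOpen s) (v : E) :
    DifferentiableOn ℂ (fun p => fderiv ℂ f p v) s := by
  have := FiniteDimensional.proper ℂ E
  intro p hp
  obtain ⟨r, hr, hball⟩ := Metric.nhds_basis_closedBall.mem_iff.1 (hs.mem_nhds hp)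
  have hlim := ((tendstoLocallyUniformlyOn_iff_forall_isCompact hs).1
    (tendstoLocallyUniformlyOn_inv_smul_sub hf hs v) _ hball (isCompact_closedBall p r)).mono
      ((ball_subset_ball (half_le_self hr.le)).trans ball_subset_closedBall)
  have hsmall : ∀ᶠ t in 𝓝[≠] (0 : ℂ), ‖t • v‖ < r / 2 := by
    have : Tendsto (fun t : ℂ => ‖t • v‖) (𝓝[≠] 0) (𝓝 0) :=
      ((continuous_id.smul continuous_const).norm.tendsto' 0 0 (by simp)).mono_left
        nhdsWithin_le_nhds
    exact this.eventually_lt_const (half_pos hr)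
  refine ((differentiableOn_of_tendstoUniformlyOn hlim ?_ isOpen_ball).differentiableAt
    (ball_mem_nhds p (half_pos hr))).differentiableWithinAt
  filter_upwards [hsmall] with t ht
  have hshift : ∀ q ∈ ball p (r / 2), q + t • v ∈ s := fun q hq => hball <| by
    rw [mem_closedBall_iff_norm, add_sub_right_comm]
    linarith [norm_add_le (q - p) (t • v), mem_ball_iff_norm.1 hq]
  have hsub : ball p (r / 2) ⊆ s :=
    ((ball_subset_ball (half_le_self hr.le)).trans ball_subset_closedBall).trans hball
  exact ((hf.comp (differentiableOn_id.add_const _) hshift).sub (hf.mono hsub)).const_smul _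

theorem contDiffOn_of_complex_differentiableOn [FiniteDimensional ℂ E] [CompleteSpace F]
    (hf : DifferentiableOn ℂ f s) (hs : IsOpen s) (n : ℕ) :
    ContDiffOn ℂ n f s := by
  induction n generalizing f with
  | zero => exact contDiffOn_zero.2 hf.continuousOn
  | succ n ih =>
    rw [Nat.cast_succ, contDiffOn_succ_iff_fderiv_of_isOpen hs]
    exact ⟨hf, by simp, contDiffOn_clm_apply.2 fun v =>
      ih (differentiableOn_fderiv_apply_const hf hs v)⟩

end SeveralComplexVariables

section DirectionalDerivatives

variable {𝕜 E F : Type*} [NontriviallyNormedField 𝕜] [NormedAddCommGroup E] [NormedSpace 𝕜 E]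
  [NormedAddCommGroup F] [NormedSpace 𝕜 F] {p : E}

theorem lineDeriv_eventuallyEq_fderiv {f : E → F} (hf : ContDiffAt 𝕜 1 f p) (v : E) :
    (fun q => lineDeriv 𝕜 f q v) =ᶠ[nhds p] fun q => fderiv 𝕜 f q v :=
  (hf.eventually (by simp)).mono fun _ hq => (hq.differentiableAt one_ne_zero).lineDeriv_eq_fderiv

theorem differentiableAt_lineDeriv {f : E → F} (hf : ContDiffAt 𝕜 2 f p) (v : E) :
    DifferentiableAt 𝕜 (fun q => lineDeriv 𝕜 f q v) p := by
  have hfderiv : DifferentiableAt 𝕜 (fderiv 𝕜 f) p :=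
    (hf.fderiv_right (m := 1) (by norm_num)).differentiableAt one_ne_zero
  exact (hfderiv.clm_apply (differentiableAt_const v)).congr_of_eventuallyEq
    (lineDeriv_eventuallyEq_fderiv (hf.of_le one_le_two) v)

theorem lineDeriv_lineDeriv_comm [IsRCLikeNormedField 𝕜] {f : E → F} (hf : ContDiffAt 𝕜 2 f p)
    (v w : E) :
    lineDeriv 𝕜 (fun q => lineDeriv 𝕜 f q v) p w =
      lineDeriv 𝕜 (fun q => lineDeriv 𝕜 f q w) p v := by
  have hfderiv : DifferentiableAt 𝕜 (fderiv 𝕜 f) p :=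
    (hf.fderiv_right (m := 1) (by norm_num)).differentiableAt one_ne_zero
  have hhessian : ∀ v w : E,
      lineDeriv 𝕜 (fun q => lineDeriv 𝕜 f q v) p w = fderiv 𝕜 (fderiv 𝕜 f) p w v := fun v w => by
    rw [Filter.EventuallyEq.lineDeriv_eq
        (lineDeriv_eventuallyEq_fderiv (hf.of_le one_le_two) v),
      (hfderiv.clm_apply (differentiableAt_const v)).lineDeriv_eq_fderiv,
      fderiv_clm_apply hfderiv (differentiableAt_const v)]
    simp
  rw [hhessian v w, hhessian w v]
  exact hf.isSymmSndFDerivAt (by simp) w v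

theorem lineDeriv_add {f g : E → F} {v : E} (hf : LineDifferentiableAt 𝕜 f p v)
    (hg : LineDifferentiableAt 𝕜 g p v) :
    lineDeriv 𝕜 (fun q => f q + g q) p v = lineDeriv 𝕜 f p v + lineDeriv 𝕜 g p v :=
  deriv_fun_add hf hg

theorem lineDeriv_mul {f g : E → 𝕜} {v : E} (hf : LineDifferentiableAt 𝕜 f p v)
    (hg : LineDifferentiableAt 𝕜 g p v) :
    lineDeriv 𝕜 (fun q => f q * g q) p v = lineDeriv 𝕜 f p v * g p + f p * lineDeriv 𝕜 g p v := by
  simpa [lineDeriv] using deriv_fun_mul hf hg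

theorem lineDeriv_div {f g : E → 𝕜} {v : E} (hf : LineDifferentiableAt 𝕜 f p v)
    (hg : LineDifferentiableAt 𝕜 g p v) (hne : g p ≠ 0) :
    lineDeriv 𝕜 (fun q => f q / g q) p v =
      (lineDeriv 𝕜 f p v * g p - f p * lineDeriv 𝕜 g p v) / g p ^ 2 := by
  simpa [lineDeriv] using deriv_fun_div hf hg (by simpa using hne)

end DirectionalDerivatives

section ChainRule

variable {E : Type*} [NormedAddCommGroup E] [NormedSpace ℂ E] {f : ℂ × ℂ → ℂ} {g₁ g₂ : E → ℂ}
  {p : E}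

theorem pdx_eq_lineDeriv (f : ℂ × ℂ → ℂ) : pdx f = fun p => lineDeriv ℂ f p (1, 0) := by
  funext p
  have hshift := deriv_comp_const_add (fun x => f (x, p.2)) p.1 0
  rw [add_zero] at hshift
  simp [pdx, lineDeriv, ← hshift, Prod.add_def]

theorem pdy_eq_lineDeriv (f : ℂ × ℂ → ℂ) : pdy f = fun p => lineDeriv ℂ f p (0, 1) := by
  funext p
  have hshift := deriv_comp_const_add (fun y => f (p.1, y)) p.2 0
  rw [add_zero] at hshift
  simp [pdy, lineDeriv, ← hshift, Prod.add_def]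

theorem differentiableAt_pdx {p : ℂ × ℂ} (hf : ContDiffAt ℂ 2 f p) :
    DifferentiableAt ℂ (pdx f) p :=
  pdx_eq_lineDeriv f ▸ differentiableAt_lineDeriv hf (1, 0)

theorem differentiableAt_pdy {p : ℂ × ℂ} (hf : ContDiffAt ℂ 2 f p) :
    DifferentiableAt ℂ (pdy f) p :=
  pdy_eq_lineDeriv f ▸ differentiableAt_lineDeriv hf (0, 1)

theorem pdy_pdx_comm {p : ℂ × ℂ} (hf : ContDiffAt ℂ 2 f p) : pdy (pdx f) p = pdx (pdy f) p := by
  simp only [pdx_eq_lineDeriv, pdy_eq_lineDeriv]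
  exact lineDeriv_lineDeriv_comm hf (1, 0) (0, 1)

theorem lineDeriv_comp_prodMk (hf : DifferentiableAt ℂ f (g₁ p, g₂ p))
    (hg₁ : DifferentiableAt ℂ g₁ p) (hg₂ : DifferentiableAt ℂ g₂ p) (v : E) :
    lineDeriv ℂ (fun q => f (g₁ q, g₂ q)) p v =
      pdx f (g₁ p, g₂ p) * lineDeriv ℂ g₁ p v + pdy f (g₁ p, g₂ p) * lineDeriv ℂ g₂ p v := by
  have hcomp := (hf.hasFDerivAt.comp p (hg₁.hasFDerivAt.prodMk hg₂.hasFDerivAt)).hasLineDerivAt v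
  simp only [pdx_eq_lineDeriv, pdy_eq_lineDeriv, hf.lineDeriv_eq_fderiv, hg₁.lineDeriv_eq_fderiv,
    hg₂.lineDeriv_eq_fderiv]
  refine hcomp.lineDeriv.trans ?_
  set L := fderiv ℂ f (g₁ p, g₂ p)
  calc L (fderiv ℂ g₁ p v, fderiv ℂ g₂ p v)
      = L (fderiv ℂ g₁ p v • (1, 0) + fderiv ℂ g₂ p v • (0, 1)) := by simp
    _ = L (1, 0) * fderiv ℂ g₁ p v + L (0, 1) * fderiv ℂ g₂ p v := by
      simp only [map_add, map_smul, smul_eq_mul, mul_comm]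

theorem lineDeriv_lineDeriv_comp_prodMk (hf : ContDiffAt ℂ 2 f (g₁ p, g₂ p))
    (hg₁ : ContDiffAt ℂ 2 g₁ p) (hg₂ : ContDiffAt ℂ 2 g₂ p) (v w : E) :
    lineDeriv ℂ (fun q => lineDeriv ℂ (fun r => f (g₁ r, g₂ r)) q v) p w =
      pdx (pdx f) (g₁ p, g₂ p) * (lineDeriv ℂ g₁ p v * lineDeriv ℂ g₁ p w)
      + pdx (pdy f) (g₁ p, g₂ p) *
        (lineDeriv ℂ g₁ p v * lineDeriv ℂ g₂ p w + lineDeriv ℂ g₂ p v * lineDeriv ℂ g₁ p w)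
      + pdy (pdy f) (g₁ p, g₂ p) * (lineDeriv ℂ g₂ p v * lineDeriv ℂ g₂ p w)
      + pdx f (g₁ p, g₂ p) * lineDeriv ℂ (fun q => lineDeriv ℂ g₁ q v) p w
      + pdy f (g₁ p, g₂ p) * lineDeriv ℂ (fun q => lineDeriv ℂ g₂ q v) p w := by
  have hd₁ := hg₁.differentiableAt two_ne_zero
  have hd₂ := hg₂.differentiableAt two_ne_zero
  have hfx := differentiableAt_pdx hf
  have hfy := differentiableAt_pdy hf
  have hfx' : DifferentiableAt ℂ (fun q => pdx f (g₁ q, g₂ q)) p :=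
    hfx.fun_comp' p (hd₁.prodMk hd₂)
  have hfy' : DifferentiableAt ℂ (fun q => pdy f (g₁ q, g₂ q)) p :=
    hfy.fun_comp' p (hd₁.prodMk hd₂)
  have hv₁ := differentiableAt_lineDeriv hg₁ v
  have hv₂ := differentiableAt_lineDeriv hg₂ v
  have hfirst : (fun q => lineDeriv ℂ (fun r => f (g₁ r, g₂ r)) q v) =ᶠ[nhds p] fun q =>
      pdx f (g₁ q, g₂ q) * lineDeriv ℂ g₁ q v + pdy f (g₁ q, g₂ q) * lineDeriv ℂ g₂ q v := by
    filter_upwards [hg₁.eventually (by simp), hg₂.eventually (by simp),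
      (hg₁.continuousAt.prodMk hg₂.continuousAt).eventually (hf.eventually (by simp))]
      with q hq₁ hq₂ hfq
    exact lineDeriv_comp_prodMk (hfq.differentiableAt two_ne_zero)
      (hq₁.differentiableAt two_ne_zero) (hq₂.differentiableAt two_ne_zero) v
  rw [hfirst.lineDeriv_eq, lineDeriv_add (hfx'.fun_mul hv₁).lineDifferentiableAt
      (hfy'.fun_mul hv₂).lineDifferentiableAt,
    lineDeriv_mul hfx'.lineDifferentiableAt hv₁.lineDifferentiableAt,
    lineDeriv_mul hfy'.lineDifferentiableAt hv₂.lineDifferentiableAt,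
    lineDeriv_comp_prodMk hfx hd₁ hd₂, lineDeriv_comp_prodMk hfy hd₁ hd₂, pdy_pdx_comm hf]
  ring

end ChainRule

/-- The matrix of the substitution `(s, t) ↦ (α₁ s + α₂ t, β₁ s + β₂ t)` on binary cubic forms
`P s³ + R s² t - S s t² - Q t³`, in the coordinates `(P, Q, R, S)`. The GL(3) derivatives
`({}ₓ, {}ᵧ, []ₓ, []ᵧ)` are such coordinates. -/
def cubicSubstMatrix (α₁ α₂ β₁ β₂ : ℂ) : Matrix (Fin 4) (Fin 4) ℂ :=
  !![α₁ ^ 3, -β₁ ^ 3, α₁ ^ 2 * β₁, -α₁ * β₁ ^ 2;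
     -α₂ ^ 3, β₂ ^ 3, -α₂ ^ 2 * β₂, α₂ * β₂ ^ 2;
     3 * α₁ ^ 2 * α₂, -3 * β₁ ^ 2 * β₂, α₁ ^ 2 * β₂ + 2 * α₁ * β₁ * α₂,
       -(β₁ ^ 2 * α₂ + 2 * α₁ * β₁ * β₂);
     -3 * α₁ * α₂ ^ 2, 3 * β₁ * β₂ ^ 2, -(β₁ * α₂ ^ 2 + 2 * α₁ * α₂ * β₂),
       α₁ * β₂ ^ 2 + 2 * β₁ * α₂ * β₂]

theorem cubicSubstMatrix_div (t α₁ α₂ β₁ β₂ : ℂ) :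
    cubicSubstMatrix (α₁ / t) (α₂ / t) (β₁ / t) (β₂ / t) =
      (t ^ 3)⁻¹ • cubicSubstMatrix α₁ α₂ β₁ β₂ := by
  simp only [cubicSubstMatrix, smul_of, smul_cons, smul_empty, smul_eq_mul]
  ring_nf

theorem Mmat_eq_cubicSubstMatrix (w₁ w₂ : ℂ × ℂ → ℂ) (p : ℂ × ℂ) :
    Mmat w₁ w₂ p = cubicSubstMatrix (pdx w₁ p) (pdy w₁ p) (pdx w₂ p) (pdy w₂ p) := by
  simp only [Mmat, cubicSubstMatrix]
  ring_nf

section GL3Derivatives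

variable {u₁ u₂ w₁ w₂ : ℂ × ℂ → ℂ} {p : ℂ × ℂ}

theorem Jac_comp (hu₁ : DifferentiableAt ℂ u₁ (w₁ p, w₂ p))
    (hu₂ : DifferentiableAt ℂ u₂ (w₁ p, w₂ p)) (hw₁ : DifferentiableAt ℂ w₁ p)
    (hw₂ : DifferentiableAt ℂ w₂ p) :
    Jac (fun q => u₁ (w₁ q, w₂ q)) (fun q => u₂ (w₁ q, w₂ q)) p =
      Jac u₁ u₂ (w₁ p, w₂ p) * Jac w₁ w₂ p := by
  simp only [Jac, pdx_eq_lineDeriv, pdy_eq_lineDeriv, lineDeriv_comp_prodMk hu₁ hw₁ hw₂,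
    lineDeriv_comp_prodMk hu₂ hw₁ hw₂]
  ring

theorem Vvec_comp (hu₁ : ContDiffAt ℂ 2 u₁ (w₁ p, w₂ p)) (hu₂ : ContDiffAt ℂ 2 u₂ (w₁ p, w₂ p))
    (hw₁ : ContDiffAt ℂ 2 w₁ p) (hw₂ : ContDiffAt ℂ 2 w₂ p)
    (hJu : Jac u₁ u₂ (w₁ p, w₂ p) ≠ 0) (hJw : Jac w₁ w₂ p ≠ 0) :
    Vvec (fun q => u₁ (w₁ q, w₂ q)) (fun q => u₂ (w₁ q, w₂ q)) p =
      (Jac w₁ w₂ p)⁻¹ • (Mmat w₁ w₂ p *ᵥ Vvec u₁ u₂ (w₁ p, w₂ p)) + Vvec w₁ w₂ p := by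
  have hd₁ := hw₁.differentiableAt two_ne_zero
  have hd₂ := hw₂.differentiableAt two_ne_zero
  have hJ := Jac_comp (hu₁.differentiableAt two_ne_zero) (hu₂.differentiableAt two_ne_zero) hd₁ hd₂
  ext i
  fin_cases i <;>
  · simp only [Vvec, brX, brY, sqX, sqY, hJ, pdx_eq_lineDeriv, pdy_eq_lineDeriv, Mmat,
      lineDeriv_comp_prodMk (hu₁.differentiableAt two_ne_zero) hd₁ hd₂,
      lineDeriv_comp_prodMk (hu₂.differentiableAt two_ne_zero) hd₁ hd₂,
      lineDeriv_lineDeriv_comp_prodMk hu₁ hw₁ hw₂, lineDeriv_lineDeriv_comp_prodMk hu₂ hw₁ hw₂]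
    simp only [mulVec_cons, mulVec_empty, add_zero, Pi.add_apply, Pi.smul_apply,
      Function.comp_apply, smul_eq_mul, head_cons, tail_cons, Fin.zero_eta, Fin.mk_one,
      Fin.reduceFinMk, cons_val]
    field_simp
    simp only [Jac, pdx_eq_lineDeriv, pdy_eq_lineDeriv]
    ring

theorem Vvec_eq_zero_of_lineDeriv_lineDeriv {μ : ℂ × ℂ → ℂ}
    (hw₁ : ∀ v w, lineDeriv ℂ (fun q => lineDeriv ℂ w₁ q v) p w =
      μ v * lineDeriv ℂ w₁ p w + μ w * lineDeriv ℂ w₁ p v)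
    (hw₂ : ∀ v w, lineDeriv ℂ (fun q => lineDeriv ℂ w₂ q v) p w =
      μ v * lineDeriv ℂ w₂ p w + μ w * lineDeriv ℂ w₂ p v) :
    Vvec w₁ w₂ p = 0 := by
  simp only [Vvec, brX, brY, sqX, sqY, pdx_eq_lineDeriv, pdy_eq_lineDeriv, hw₁, hw₂]
  ext i
  fin_cases i <;> exact div_eq_zero_iff.2 (.inl (by ring))

end GL3Derivatives

section AffineQuotients

variable {𝕜 E : Type*} [NontriviallyNormedField 𝕜] [NormedAddCommGroup E] [NormedSpace 𝕜 E]
  (α β : E →L[𝕜] 𝕜) (a b : 𝕜) {p : E}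

theorem contDiffAt_affine_div (h : β p + b ≠ 0) {n : WithTop ℕ∞} :
    ContDiffAt 𝕜 n (fun q => (α q + a) / (β q + b)) p :=
  (α.contDiff.add contDiff_const).contDiffAt.div (β.contDiff.add contDiff_const).contDiffAt h

theorem lineDeriv_affine (v : E) : lineDeriv 𝕜 (fun q => α q + a) p v = α v :=
  (α.hasFDerivAt.add_const a).hasLineDerivAt v |>.lineDeriv

theorem lineDeriv_affine_div (h : β p + b ≠ 0) (v : E) :
    lineDeriv 𝕜 (fun q => (α q + a) / (β q + b)) p v =
      (α v - (α p + a) / (β p + b) * β v) / (β p + b) := by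
  rw [lineDeriv_div (α.differentiableAt.add_const a).lineDifferentiableAt
    (β.differentiableAt.add_const b).lineDifferentiableAt h, lineDeriv_affine, lineDeriv_affine]
  field_simp

theorem lineDeriv_lineDeriv_affine_div (h : β p + b ≠ 0) (v w : E) :
    lineDeriv 𝕜 (fun q => lineDeriv 𝕜 (fun r => (α r + a) / (β r + b)) q v) p w =
      -β v / (β p + b) * lineDeriv 𝕜 (fun q => (α q + a) / (β q + b)) p w +
        -β w / (β p + b) * lineDeriv 𝕜 (fun q => (α q + a) / (β q + b)) p v := by
  set φ : E → 𝕜 := fun q => (α q + a) / (β q + b)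
  have hφ : DifferentiableAt 𝕜 φ p :=
    (contDiffAt_affine_div α β a b h (n := 1)).differentiableAt one_ne_zero
  have hnum : LineDifferentiableAt 𝕜 (fun q => -β v * φ q + α v) p w :=
    ((hφ.const_mul (-β v)).add_const (α v)).lineDifferentiableAt
  have hden : LineDifferentiableAt 𝕜 (fun q => β q + b) p w :=
    (β.differentiableAt.add_const b).lineDifferentiableAt
  have hfirst : (fun q => lineDeriv 𝕜 φ q v) =ᶠ[nhds p]
      fun q => (-β v * φ q + α v) / (β q + b) := by
    filter_upwards [(β.continuous.add continuous_const).continuousAt.eventually_ne h] with q hq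
    rw [lineDeriv_affine_div α β a b hq]
    ring
  have hnum' : lineDeriv 𝕜 (fun q => -β v * φ q + α v) p w = -β v * lineDeriv 𝕜 φ p w := by
    simp [lineDeriv]
  have hφv : lineDeriv 𝕜 φ p v = (α v - φ p * β v) / (β p + b) :=
    lineDeriv_affine_div α β a b h v
  rw [hfirst.lineDeriv_eq, lineDeriv_div hnum hden h, lineDeriv_affine, hnum', hφv]
  field_simp
  ring

end AffineQuotients

section LinearFractional

/-- The linear form `(x, y) ↦ a₁ x + a₂ y`, as a continuous linear map. -/
def coordForm (a₁ a₂ : ℂ) : ℂ × ℂ →L[ℂ] ℂ :=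
  a₁ • ContinuousLinearMap.fst ℂ ℂ ℂ + a₂ • ContinuousLinearMap.snd ℂ ℂ ℂ

theorem coordForm_apply (a₁ a₂ : ℂ) (p : ℂ × ℂ) : coordForm a₁ a₂ p = a₁ * p.1 + a₂ * p.2 :=
  rfl

/-- The linear fractional function `(a₁ x + a₂ y + a₃) / (c₁ x + c₂ y + c₃)` of `p = (x, y)`, with
the value `0` where the denominator vanishes. -/
def linFrac (a₁ a₂ a₃ c₁ c₂ c₃ : ℂ) (p : ℂ × ℂ) : ℂ :=
  (a₁ * p.1 + a₂ * p.2 + a₃) / (c₁ * p.1 + c₂ * p.2 + c₃)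

variable (a₁ a₂ a₃ b₁ b₂ b₃ c₁ c₂ c₃ : ℂ) {p : ℂ × ℂ}

theorem contDiffAt_linFrac (hp : c₁ * p.1 + c₂ * p.2 + c₃ ≠ 0) {n : WithTop ℕ∞} :
    ContDiffAt ℂ n (linFrac a₁ a₂ a₃ c₁ c₂ c₃) p :=
  contDiffAt_affine_div (coordForm a₁ a₂) (coordForm c₁ c₂) a₃ c₃ hp

theorem lineDeriv_linFrac (hp : c₁ * p.1 + c₂ * p.2 + c₃ ≠ 0) (v : ℂ × ℂ) :
    lineDeriv ℂ (linFrac a₁ a₂ a₃ c₁ c₂ c₃) p v =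
      (v.1 * ((a₁ * c₂ - a₂ * c₁) * p.2 + (a₁ * c₃ - a₃ * c₁)) +
        v.2 * ((a₂ * c₁ - a₁ * c₂) * p.1 + (a₂ * c₃ - a₃ * c₂))) /
      (c₁ * p.1 + c₂ * p.2 + c₃) ^ 2 := by
  refine (lineDeriv_affine_div (coordForm a₁ a₂) (coordForm c₁ c₂) a₃ c₃ hp v).trans ?_
  rw [coordForm_apply, coordForm_apply, coordForm_apply, coordForm_apply, div_mul_eq_mul_div,
    sub_div' hp, div_div, ← sq]
  congr 1
  ring

theorem pdx_linFrac (hp : c₁ * p.1 + c₂ * p.2 + c₃ ≠ 0) :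
    pdx (linFrac a₁ a₂ a₃ c₁ c₂ c₃) p =
      ((a₁ * c₂ - a₂ * c₁) * p.2 + (a₁ * c₃ - a₃ * c₁)) / (c₁ * p.1 + c₂ * p.2 + c₃) ^ 2 := by
  simp [pdx_eq_lineDeriv, lineDeriv_linFrac a₁ a₂ a₃ c₁ c₂ c₃ hp]

theorem pdy_linFrac (hp : c₁ * p.1 + c₂ * p.2 + c₃ ≠ 0) :
    pdy (linFrac a₁ a₂ a₃ c₁ c₂ c₃) p =
      ((a₂ * c₁ - a₁ * c₂) * p.1 + (a₂ * c₃ - a₃ * c₂)) / (c₁ * p.1 + c₂ * p.2 + c₃) ^ 2 := by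
  simp [pdy_eq_lineDeriv, lineDeriv_linFrac a₁ a₂ a₃ c₁ c₂ c₃ hp]

theorem Jac_linFrac (hp : c₁ * p.1 + c₂ * p.2 + c₃ ≠ 0) :
    Jac (linFrac a₁ a₂ a₃ c₁ c₂ c₃) (linFrac b₁ b₂ b₃ c₁ c₂ c₃) p =
      (a₁ * (b₂ * c₃ - b₃ * c₂) - a₂ * (b₁ * c₃ - b₃ * c₁) + a₃ * (b₁ * c₂ - b₂ * c₁)) /
        (c₁ * p.1 + c₂ * p.2 + c₃) ^ 3 := by
  simp only [Jac, pdx_linFrac _ _ _ _ _ _ hp, pdy_linFrac _ _ _ _ _ _ hp]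
  field_simp
  ring

theorem Vvec_linFrac (hp : c₁ * p.1 + c₂ * p.2 + c₃ ≠ 0) :
    Vvec (linFrac a₁ a₂ a₃ c₁ c₂ c₃) (linFrac b₁ b₂ b₃ c₁ c₂ c₃) p = 0 :=
  Vvec_eq_zero_of_lineDeriv_lineDeriv
    (lineDeriv_lineDeriv_affine_div (coordForm a₁ a₂) (coordForm c₁ c₂) a₃ c₃ hp)
    (lineDeriv_lineDeriv_affine_div (coordForm b₁ b₂) (coordForm c₁ c₂) b₃ c₃ hp)

end LinearFractional

/-- Transformation of the four GL(3) derivatives under a linear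
fractional change of the second (independent) arguments. -/
theorem statement4 (a₁ a₂ a₃ b₁ b₂ b₃ c₁ c₂ c₃ : ℂ)
    (hdet : a₁ * (b₂ * c₃ - b₃ * c₂) - a₂ * (b₁ * c₃ - b₃ * c₁)
        + a₃ * (b₁ * c₂ - b₂ * c₁) ≠ 0)
    (w₁ w₂ : ℂ × ℂ → ℂ)
    (hw₁ : w₁ = fun p => (a₁ * p.1 + a₂ * p.2 + a₃) / (c₁ * p.1 + c₂ * p.2 + c₃))
    (hw₂ : w₂ = fun p => (b₁ * p.1 + b₂ * p.2 + b₃) / (c₁ * p.1 + c₂ * p.2 + c₃))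
    (A₁ A₂ B₁ B₂ : ℂ × ℂ → ℂ)
    (hA₁ : A₁ = fun p => (a₁ * c₂ - a₂ * c₁) * p.2 + (a₁ * c₃ - a₃ * c₁))
    (hA₂ : A₂ = fun p => (a₂ * c₁ - a₁ * c₂) * p.1 + (a₂ * c₃ - a₃ * c₂))
    (hB₁ : B₁ = fun p => (b₁ * c₂ - b₂ * c₁) * p.2 + (b₁ * c₃ - b₃ * c₁))
    (hB₂ : B₂ = fun p => (b₂ * c₁ - b₁ * c₂) * p.1 + (b₂ * c₃ - b₃ * c₂))
    (Ω' : Set (ℂ × ℂ)) (hΩ' : IsOpen Ω')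
    (u₁ u₂ : ℂ × ℂ → ℂ)
    (hu₁ : DifferentiableOn ℂ u₁ Ω') (hu₂ : DifferentiableOn ℂ u₂ Ω')
    (hJu : ∀ q ∈ Ω', Jac u₁ u₂ q ≠ 0) :
    ∀ p : ℂ × ℂ, c₁ * p.1 + c₂ * p.2 + c₃ ≠ 0 → (w₁ p, w₂ p) ∈ Ω' →
      Vvec (fun q => u₁ (w₁ q, w₂ q)) (fun q => u₂ (w₁ q, w₂ q)) p =
        ((a₁ * (b₂ * c₃ - b₃ * c₂) - a₂ * (b₁ * c₃ - b₃ * c₁)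
            + a₃ * (b₁ * c₂ - b₂ * c₁)) * (c₁ * p.1 + c₂ * p.2 + c₃) ^ 3)⁻¹ •
          (!![(A₁ p) ^ 3, -(B₁ p) ^ 3, (A₁ p) ^ 2 * B₁ p, -(A₁ p) * (B₁ p) ^ 2;
              -(A₂ p) ^ 3, (B₂ p) ^ 3, -(A₂ p) ^ 2 * B₂ p, A₂ p * (B₂ p) ^ 2;
              3 * (A₁ p) ^ 2 * A₂ p, -3 * (B₁ p) ^ 2 * B₂ p,
                (A₁ p) ^ 2 * B₂ p + 2 * A₁ p * B₁ p * A₂ p,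
                -((B₁ p) ^ 2 * A₂ p + 2 * A₁ p * B₁ p * B₂ p);
              -3 * A₁ p * (A₂ p) ^ 2, 3 * B₁ p * (B₂ p) ^ 2,
                -((B₁ p) * (A₂ p) ^ 2 + 2 * A₁ p * A₂ p * B₂ p),
                A₁ p * (B₂ p) ^ 2 + 2 * B₁ p * A₂ p * B₂ p]
            *ᵥ Vvec u₁ u₂ (w₁ p, w₂ p)) := by
  intro p hp hpΩ
  obtain rfl : w₁ = linFrac a₁ a₂ a₃ c₁ c₂ c₃ := hw₁
  obtain rfl : w₂ = linFrac b₁ b₂ b₃ c₁ c₂ c₃ := hw₂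
  have hsmooth : ∀ {u : ℂ × ℂ → ℂ}, DifferentiableOn ℂ u Ω' →
      ContDiffAt ℂ 2 u (linFrac a₁ a₂ a₃ c₁ c₂ c₃ p, linFrac b₁ b₂ b₃ c₁ c₂ c₃ p) := fun hu =>
    (contDiffOn_of_complex_differentiableOn hu hΩ' 2).contDiffAt (hΩ'.mem_nhds hpΩ)
  have hJw := Jac_linFrac a₁ a₂ a₃ b₁ b₂ b₃ c₁ c₂ c₃ hp
  have hJw_ne := hJw.trans_ne (div_ne_zero hdet (pow_ne_zero 3 hp))
  rw [Vvec_comp (hsmooth hu₁) (hsmooth hu₂) (contDiffAt_linFrac a₁ a₂ a₃ c₁ c₂ c₃ hp)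
      (contDiffAt_linFrac b₁ b₂ b₃ c₁ c₂ c₃ hp) (hJu _ hpΩ) hJw_ne,
    Vvec_linFrac a₁ a₂ a₃ b₁ b₂ b₃ c₁ c₂ c₃ hp, add_zero, Mmat_eq_cubicSubstMatrix,
    pdx_linFrac a₁ a₂ a₃ c₁ c₂ c₃ hp, pdy_linFrac a₁ a₂ a₃ c₁ c₂ c₃ hp,
    pdx_linFrac b₁ b₂ b₃ c₁ c₂ c₃ hp, pdy_linFrac b₁ b₂ b₃ c₁ c₂ c₃ hp,
    cubicSubstMatrix_div, smul_mulVec, smul_smul, hJw, hA₁, hA₂, hB₁, hB₂]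
  congr 1
  field_simp
end
end
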